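/- Let a > 0, λ > 0, T = a/λ, β > 0, σ ∈ (0,1) and n ∈ ℕ. Then ∫_0^∞ t^n · Q_a(λ·t − ln(1/σ)) · exp(−β·t) dt = n! · β^{−(n+1)} · [ 1 + 2·Re Σ_{q≥1} exp((π·i·q/a)·ln(2σ²)) · Γ(1 + π·i·q/a) · (1 − 2·π·i·q/(β·T))^{−(n+1)} ], where the series over q ≥ 1 converges absolutely and Γ is the complex Gamma function. -/

import Mathlib

open Real Complex MeasureTheory

/-- The universal peak shape `A(z) = (1/2) e^{-2z} exp(-(1/2) e^{-2z})`. -/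
noncomputable def A (z : ℝ) : ℝ :=
  (1 / 2) * Real.exp (-2 * z) * Real.exp (-(1 / 2) * Real.exp (-2 * z))

/-- The universal periodic function `Q_a(y) = 2a ∑_{k ∈ ℤ} A(y - k a)`. -/
noncomputable def Q (a y : ℝ) : ℝ := 2 * a * ∑' k : ℤ, A (y - k * a)

/-- The `q`-th term (for `q ≥ 1`) of the Fourier series expressing the moments of the
first-passage-time distribution. -/
noncomputable def momentTerm (a σ β T : ℝ) (n : ℕ) (q : ℕ) : ℂ :=
  Complex.exp ((Real.pi * Complex.I * (q + 1) / a) * Real.log (2 * σ ^ 2)) *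
    Complex.Gamma (1 + Real.pi * Complex.I * (q + 1) / a) *
    (1 - 2 * Real.pi * Complex.I * (q + 1) / (β * T)) ^ (-(n : ℤ) - 1)

/-!
The function `Q a` is the periodization of the peak `A`, so Poisson summation expands it as a Fourier
series. The substitution `u = e^{-2z} / 2` turns the Fourier transform of `A` into a Gamma integral,
whence `Q a y = ∑_{q ∈ ℤ} 2^{πiq/a} Γ(1 + πiq/a) e^{2πiqy/a}` (`Q_eq`). Poisson summation needs decay
of `A` (`A_decay`) and summability of the coefficients (`summable_coef`); for the latter the crude
bound `|Γ(1 + ix)| ≤ 2 / x²` (`gamma_bound`) is enough.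

At `y = lam t - log (1 / σ)` each mode contributes
`∫₀^∞ t^n e^{-rt} dt = n! r^{-(n+1)}` with `r = β (1 - 2πiq/(βT))` (`integral_term`). The modulus of the
`q`-th integrand is its coefficient's modulus times `t^n e^{-βt}`, so the series may be integrated term
by term (`hasSum_intTerm`). The mode `q = 0` gives the summand `1`, and the modes `q` and `-q` are complex
conjugates, so together they give twice a real part.
-/

/-- Applying the functional equation twice writes `Γ(3 + ix)` as `(2 + ix)(1 + ix) Γ(1 + ix)`, while
`|Γ(3 + ix)| ≤ Γ(3) = 2`. -/
lemma gamma_bound (x : ℝ) (hx : x ≠ 0) :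
    ‖Complex.Gamma (1 + x * I)‖ ≤ 2 / x ^ 2 := by
  have h1 : (1 + x * I : ℂ) ≠ 0 := by
    intro h; simpa using congrArg Complex.re h
  have h2 : (1 + x * I + 1 : ℂ) ≠ 0 := by
    intro h; have := congrArg Complex.re h; norm_num at this
  have e : Complex.Gamma (1 + x * I + 1 + 1)
      = (1 + x * I + 1) * ((1 + x * I) * Complex.Gamma (1 + x * I)) := by
    rw [Complex.Gamma_add_one _ h2, Complex.Gamma_add_one _ h1]
  have b : ‖Complex.Gamma (1 + x * I + 1 + 1)‖ ≤ 2 := by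
    have hr : (1 + x * I + 1 + 1 : ℂ).re = 3 := by simp; norm_num
    rw [Complex.Gamma_eq_integral (by rw [hr]; norm_num), Complex.GammaIntegral]
    refine (norm_integral_le_integral_norm _).trans ?_
    have : ∀ t ∈ Set.Ioi (0:ℝ), ‖((Real.exp (-t) : ℝ) : ℂ) * (t:ℂ) ^ ((1 + x * I + 1 + 1 : ℂ) - 1)‖
        = Real.exp (-t) * t ^ ((3:ℝ) - 1) := by
      intro t ht
      rw [norm_mul, Complex.norm_cpow_eq_rpow_re_of_pos ht, Complex.sub_re, hr, Complex.norm_real,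
        Real.norm_of_nonneg (Real.exp_nonneg _), Complex.one_re]
    rw [setIntegral_congr_fun measurableSet_Ioi this, ← Real.Gamma_eq_integral (by norm_num)]
    have := Real.Gamma_nat_eq_factorial 2
    norm_num at this
    norm_num [this]
  have n1 : |x| ≤ ‖(1 + x * I : ℂ)‖ := by simpa using Complex.abs_im_le_norm (1 + x * I : ℂ)
  have n2 : |x| ≤ ‖(1 + x * I + 1 : ℂ)‖ := by
    simpa using Complex.abs_im_le_norm (1 + x * I + 1 : ℂ)
  rw [e, norm_mul, norm_mul] at b
  have hx2 : 0 < x ^ 2 := by positivity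
  rw [le_div_iff₀ hx2, ← sq_abs]
  have h3 : |x| * |x| ≤ ‖(1 + x * I + 1 : ℂ)‖ * ‖(1 + x * I : ℂ)‖ :=
    mul_le_mul n2 n1 (abs_nonneg _) (norm_nonneg _)
  nlinarith [norm_nonneg (Complex.Gamma (1 + x * I))]

/-- With `u = e^{-2z} / 2` one has `A z = u e^{-u}`, which is at most `u` and at most `2 / u`; the two
bounds serve `z ≥ 0` and `z ≤ 0` respectively. -/
lemma A_bound (z : ℝ) : A z ≤ 4 * Real.exp (-2 * |z|) := by
  unfold A
  set u := (1 / 2) * Real.exp (-2 * z) with hu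
  have hup : 0 < u := by positivity
  have hx : -(1 / 2) * Real.exp (-2 * z) = -u := by rw [hu]; ring
  rw [hx]
  rcases le_total 0 z with h | h
  · rw [abs_of_nonneg h]
    have : Real.exp (-u) ≤ 1 := Real.exp_le_one_iff.2 (by linarith)
    nlinarith [Real.exp_pos (-2 * z)]
  · rw [abs_of_nonpos h]
    have h1 : u ^ 2 / 2 ≤ Real.exp u := by
      have := Real.quadratic_le_exp_of_nonneg hup.le
      linarith
    have h2 : Real.exp (-2 * -z) * (2 * u) = 1 := by
      rw [hu, show Real.exp (-2 * -z) * (2 * (1 / 2 * Real.exp (-2 * z)))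
        = Real.exp (-2 * -z) * Real.exp (-2 * z) by ring, ← Real.exp_add]
      simp
    have h3 : Real.exp (-2 * -z) = 1 / (2 * u) := by rw [eq_div_iff (by positivity)]; exact h2
    rw [h3, Real.exp_neg, ← div_eq_mul_inv, div_le_iff₀ (Real.exp_pos _)]
    calc u = 4 * (1 / (2 * u)) * (u ^ 2 / 2) := by field_simp; norm_num
      _ ≤ _ := by gcongr

lemma A_nonneg (z : ℝ) : 0 ≤ A z := by unfold A; positivity

lemma A_decay (a : ℝ) (ha : 0 < a) :
    (fun x : ℝ => (A (a * x) : ℂ)) =O[Filter.cocompact ℝ] fun x : ℝ => |x| ^ (-2 : ℝ) := by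
  -- `e^s ≥ 1 + s + s² / 2` at `s = 2a|x|` gives `4 e^{-s} ≤ 2 / (a x)²`.
  refine Asymptotics.IsBigO.of_bound (2 / a ^ 2) (Filter.Eventually.mono
    (Filter.mem_cocompact.2 ⟨{0}, isCompact_singleton, subset_rfl⟩) fun x hx => ?_)
  have hx : 0 < |x| := abs_pos.2 hx
  rw [Complex.norm_real, Real.norm_of_nonneg (A_nonneg _), Real.norm_of_nonneg (by positivity),
    Real.rpow_neg hx.le]
  refine (A_bound _).trans ?_
  rw [abs_mul, abs_of_pos ha, show -2 * (a * |x|) = -(2 * (a * |x|)) by ring, Real.exp_neg]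
  have hy : 0 < a * |x| := by positivity
  have := Real.quadratic_le_exp_of_nonneg (x := 2 * (a * |x|)) (by positivity)
  norm_num
  rw [← div_eq_mul_inv, ← div_eq_mul_inv, div_div, ← sq_abs x,
    div_le_div_iff₀ (Real.exp_pos _) (by positivity)]
  nlinarith

open scoped FourierTransform in
/-- The substitution `u = e^{-2az}` turns the Fourier integral of the peak into the Mellin transform
of `e^{-u/2}`, which is a Gamma integral. -/
lemma fourier_A (a : ℝ) (ha : 0 < a) (w : ℝ) :
    𝓕 (fun x : ℝ => (A (a * x) : ℂ)) w = 1 / (2 * a) *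
      (Complex.exp ((π * I * w / a) * Real.log 2) * Complex.Gamma (1 + π * I * w / a)) := by
  have hac : (a:ℂ) ≠ 0 := by exact_mod_cast ha.ne'
  set s : ℂ := 1 + π * I * w / a with hs
  have hs' : s = 1 + ((π * w / a : ℝ) : ℂ) * I := by rw [hs]; push_cast; ring
  have hre : s.re = 1 := by rw [hs']; simp
  have him : s.im = π * w / a := by
    rw [hs', Complex.add_im, Complex.im_ofReal_mul]; simp
  have key := mellin_eq_fourier (fun u : ℝ => Complex.exp (-((1 / 2 : ℝ) * u))) (s := s)
  rw [mellin] at key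
  simp only [smul_eq_mul] at key
  rw [Complex.integral_cpow_mul_exp_neg_mul_Ioi (by rw [hre]; norm_num) (by simp), hre, him,
    Real.fourier_real_eq_integral_exp_smul] at key
  rw [Real.fourier_real_eq_integral_exp_smul]
  have := MeasureTheory.Measure.integral_comp_mul_left (fun v : ℝ =>
    Complex.exp (↑(-2 * π * v * (π * w / a / (2 * π))) * I) •
      (Real.exp (-1 * v) • Complex.exp (-((1/2:ℝ) * (Real.exp (-v) : ℝ))))) (2 * a)
  simp only [smul_eq_mul] at this key ⊢
  rw [← key] at this
  have hA : ∀ v : ℝ, Complex.exp (↑(-2 * π * v * w) * I) * (A (a * v) : ℂ) = (1 / 2) *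
      (Complex.exp (↑(-2 * π * (2 * a * v) * (π * w / a / (2 * π))) * I) *
        (Real.exp (-1 * (2 * a * v)) •
          Complex.exp (-(((1 / 2 : ℝ) : ℂ) * (Real.exp (-(2 * a * v)) : ℝ))))) := by
    intro v
    have e1 : -2 * π * (2 * a * v) * (π * w / a / (2 * π)) = -2 * π * v * w := by
      field_simp
    rw [e1, A, Complex.real_smul, show -2 * (a * v) = -(2 * a * v) by ring,
      show -1 * (2 * a * v) = -(2 * a * v) by ring]
    push_cast
    ring_nf
  have h2 : (1 / ((1 / 2 : ℝ) : ℂ)) ^ s = 2 * Complex.exp ((π * I * w / a) * Real.log 2) := by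
    rw [show (1 / ((1 / 2 : ℝ) : ℂ)) = 2 by norm_num,
      Complex.cpow_def_of_ne_zero two_ne_zero, hs, mul_add, Complex.exp_add, mul_one,
      Complex.exp_log two_ne_zero, Complex.ofReal_log zero_le_two, mul_comm (Complex.log _)]
    simp
  rw [integral_congr_ae (Filter.Eventually.of_forall hA), integral_const_mul, this, h2,
    abs_of_pos (by positivity), Complex.real_smul]
  push_cast
  field_simp

lemma integrable_pow_exp (n : ℕ) (r : ℂ) (hr : 0 < r.re) :
    IntegrableOn (fun t : ℝ => (t:ℂ) ^ n * Complex.exp (-(r * t))) (Set.Ioi 0) := by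
  have h := integrableOn_rpow_mul_exp_neg_mul_rpow (p := 1) (s := n) (b := r.re)
    (lt_of_lt_of_le (by norm_num) n.cast_nonneg) one_pos hr
  refine Integrable.mono' h (Continuous.aestronglyMeasurable (by fun_prop)) ?_
  refine (ae_restrict_iff' measurableSet_Ioi).2 (Filter.Eventually.of_forall fun t ht => le_of_eq ?_)
  rw [norm_mul, norm_pow, Complex.norm_exp, Complex.norm_real, Real.norm_of_nonneg (le_of_lt ht)]
  simp

/-- The Gamma integral at a positive integer with a complex rate `r`, by integration by parts. -/
lemma integral_term (n : ℕ) (r : ℂ) (hr : 0 < r.re) :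
    ∫ t in Set.Ioi (0:ℝ), (t:ℂ) ^ n * Complex.exp (-(r * t)) = n.factorial * r ^ (-(n:ℤ) - 1) := by
  have hr0 : r ≠ 0 := by rintro rfl; simp at hr
  have hder : ∀ t : ℝ, HasDerivAt (fun t : ℝ => -Complex.exp (-(r * t)) / r)
      (Complex.exp (-(r * t))) t := by
    intro t
    have h1 : HasDerivAt (fun t : ℝ => -(r * (t:ℂ))) (-r) t := by
      simpa using ((hasDerivAt_id (t:ℂ)).comp_ofReal.const_mul r).fun_neg
    convert! (h1.cexp.neg.div_const r) using 1
    field_simp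
  induction n with
  | zero =>
    have := integral_exp_mul_complex_Ioi (a := -r) (by simpa using hr) 0
    simp only [neg_mul] at this
    simp [this]
  | succ k ih =>
    have hpow : ∀ t : ℝ, HasDerivAt (fun t : ℝ => (t:ℂ) ^ (k+1)) ((k + 1) * (t:ℂ) ^ k) t := by
      intro t
      simpa using ((hasDerivAt_id (t:ℂ)).pow (k+1)).comp_ofReal
    have hprod : ∀ t : ℝ, ((k + 1) * (t:ℂ) ^ k) * (-Complex.exp (-(r * t)) / r)
        = (-(k+1) / r) * ((t:ℂ) ^ k * Complex.exp (-(r * t))) := by intro t; ring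
    have key := integral_Ioi_mul_deriv_eq_deriv_mul (a := (0:ℝ)) (a' := (0:ℂ)) (b' := 0)
      (fun t _ => hpow t) (fun t _ => hder t) (integrable_pow_exp (k+1) r hr) ?_ ?_ ?_
    · rw [key, integral_congr_ae (Filter.Eventually.of_forall hprod), integral_const_mul, ih]
      have : r ^ (-(k:ℤ) - 1) = r * r ^ (-((k+1 : ℕ):ℤ) - 1) := by
        rw [← zpow_one_add₀ hr0]; congr 1; push_cast; ring
      rw [this, Nat.factorial_succ]; push_cast; field_simp; ring
    · have := (integrable_pow_exp k r hr).const_mul (-(k+1) / r)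
      exact this.congr (Filter.Eventually.of_forall fun t => (hprod t).symm)
    · have : Continuous fun t : ℝ => (t:ℂ) ^ (k+1) * (-Complex.exp (-(r * t)) / r) := by fun_prop
      have := (this.tendsto 0).mono_left (nhdsWithin_le_nhds (s := Set.Ioi 0))
      simpa [Pi.mul_def] using this
    · rw [tendsto_zero_iff_norm_tendsto_zero]
      have h := (tendsto_rpow_mul_exp_neg_mul_atTop_nhds_zero ((k+1 : ℕ):ℝ) r.re hr).div_const ‖r‖
      rw [zero_div] at h
      refine h.congr' ?_
      filter_upwards [Filter.eventually_gt_atTop 0] with t ht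
      rw [Real.rpow_natCast, Pi.mul_apply, norm_mul, norm_pow, norm_div, norm_neg,
        Complex.norm_exp, Complex.norm_real, Real.norm_of_nonneg ht.le, mul_div_assoc]
      simp

/-- The `q`-th Fourier coefficient, `q ∈ ℤ`, of `Q a` with respect to `y ↦ e^{2πiqy/a}`. -/
noncomputable def coef (a : ℝ) (q : ℤ) : ℂ :=
  Complex.exp ((π * I * q / a) * Real.log 2) * Complex.Gamma (1 + π * I * q / a)

lemma summable_coef (a : ℝ) (ha : 0 < a) : Summable fun q : ℤ => ‖coef a q‖ := by
  have hs : Summable fun q : ℤ => (2 * a ^ 2 / π ^ 2) * (1 / (q:ℝ) ^ 2) :=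
    (Real.summable_one_div_int_pow.2 one_lt_two).mul_left _
  refine hs.of_norm_bounded_eventually ?_
  filter_upwards [(Set.finite_singleton (0:ℤ)).compl_mem_cofinite] with q hq
  have hq : (q:ℝ) ≠ 0 := by exact_mod_cast hq
  have hx : π * q / a ≠ 0 := by positivity
  have e1 : (π * I * q / a * Real.log 2 : ℂ) = ((π * q / a * Real.log 2 : ℝ) : ℂ) * I := by
    push_cast; ring
  have e2 : (1 + π * I * q / a : ℂ) = 1 + ((π * q / a : ℝ) : ℂ) * I := by push_cast; ring
  rw [norm_norm, coef, norm_mul, e1, Complex.norm_exp_ofReal_mul_I, one_mul, e2]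
  refine (gamma_bound _ hx).trans (le_of_eq ?_)
  field_simp

open scoped FourierTransform in
/-- The Fourier series of the periodic function `Q a`: Poisson summation for `x ↦ A (a x)`. -/
lemma Q_eq (a : ℝ) (ha : 0 < a) (y : ℝ) :
    (Q a y : ℂ) = ∑' q : ℤ, coef a q * Complex.exp (2 * π * I * q * y / a) := by
  have hac : (a:ℂ) ≠ 0 := by exact_mod_cast ha.ne'
  have hF : ∀ q : ℤ, 𝓕 (fun x : ℝ => (A (a * x) : ℂ)) q = 1 / (2 * a) * coef a q := by
    intro q
    rw [fourier_A a ha, coef]; push_cast; rfl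
  have hsum : Summable fun q : ℤ => 𝓕 (fun x : ℝ => (A (a * x) : ℂ)) q := by
    simp_rw [hF]
    exact (summable_coef a ha).of_norm.mul_left _
  have hc : Continuous fun x : ℝ => (A (a * x) : ℂ) := by unfold A; fun_prop
  have key := Real.tsum_eq_tsum_fourier_of_rpow_decay_of_summable hc one_lt_two
    (A_decay a ha) hsum (y / a)
  simp_rw [hF] at key
  rw [Q, Complex.ofReal_mul, Complex.ofReal_tsum, ← (Equiv.neg ℤ).tsum_eq]
  have e : ∀ k : ℤ, (A (y - ((Equiv.neg ℤ k : ℤ) : ℝ) * a) : ℂ) = (A (a * (y / a + k)) : ℂ) := by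
    intro k
    congr 2
    simp only [Equiv.neg_apply]
    push_cast
    field_simp
    ring
  simp_rw [e]
  rw [key, ← tsum_mul_left]
  refine tsum_congr fun q => ?_
  rw [fourier_coe_apply]
  push_cast
  rw [div_one, show (2 * π * I * q * (y / a) : ℂ) = 2 * π * I * q * y / a by ring]
  field_simp

/-- The summand of the moment series indexed by all `q ∈ ℤ`, so that `momentTerm a σ β T n q` is its
value at `q + 1`. -/
noncomputable def intTerm (a σ β T : ℝ) (n : ℕ) (q : ℤ) : ℂ :=
  Complex.exp ((π * I * q / a) * Real.log (2 * σ ^ 2)) *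
    Complex.Gamma (1 + π * I * q / a) * (1 - 2 * π * I * q / (β * T)) ^ (-(n : ℤ) - 1)

lemma intTerm_neg (a σ β T : ℝ) (n : ℕ) (q : ℤ) :
    intTerm a σ β T n (-q) = (starRingEnd ℂ) (intTerm a σ β T n q) := by
  simp only [intTerm, map_mul, map_zpow₀, ← Complex.exp_conj, ← Complex.Gamma_conj, map_add,
    map_sub, map_div₀, map_one, Complex.conj_I, Complex.conj_ofReal, map_intCast, map_ofNat]
  push_cast
  simp only [mul_neg, neg_mul]

/-- Termwise integration of the Fourier series against `t ^ n e^{-βt}`: the `q`-th mode is a Gamma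
integral with the complex rate `β - 2πiq lam / a`. -/
lemma hasSum_intTerm (a lam T β σ : ℝ) (n : ℕ)
    (ha : 0 < a) (hlam : 0 < lam) (hT : T = a / lam) (hβ : 0 < β) (hσ : 0 < σ) :
    HasSum (fun q : ℤ => ((n.factorial : ℂ) * β ^ (-(n : ℤ) - 1)) * intTerm a σ β T n q)
      ((∫ t in Set.Ioi (0:ℝ), t ^ n * Q a (lam * t - Real.log (1 / σ)) * Real.exp (-β * t) : ℝ) : ℂ)
      := by
  have hac : (a:ℂ) ≠ 0 := by exact_mod_cast ha.ne'
  have hlc : (lam:ℂ) ≠ 0 := by exact_mod_cast hlam.ne'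
  have hbc : (β:ℂ) ≠ 0 := by exact_mod_cast hβ.ne'
  set K : ℤ → ℂ := fun q => coef a q * Complex.exp (2 * π * I * q * Real.log σ / a) with hK
  set r : ℤ → ℂ := fun q => β - 2 * π * I * q * lam / a with hr
  have hre : ∀ q, (r q).re = β := by
    intro q
    simp only [hr]
    rw [show (β - 2 * π * I * q * lam / a : ℂ)
      = β - ((2 * π * q * lam / a : ℝ) : ℂ) * I by push_cast; ring]
    simp only [Complex.sub_re, Complex.re_ofReal_mul, Complex.I_re, Complex.ofReal_re]
    ring
  have hKn : ∀ q, ‖K q‖ = ‖coef a q‖ := by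
    intro q
    rw [hK]
    simp only
    rw [show (2 * π * I * q * Real.log σ / a : ℂ)
      = ((2 * π * q * Real.log σ / a : ℝ) : ℂ) * I by push_cast; ring, norm_mul,
      Complex.norm_exp_ofReal_mul_I, mul_one]
  let F : ℤ → ℝ → ℂ := fun q t => K q * ((t:ℂ) ^ n * Complex.exp (-(r q * t)))
  have hint : ∀ q, IntegrableOn (F q) (Set.Ioi 0) := fun q =>
    (integrable_pow_exp n (r q) (by rw [hre]; exact hβ)).const_mul _
  have hnorm : ∀ q t, ‖F q t‖ = ‖coef a q‖ * ‖(t:ℂ) ^ n * Complex.exp (-(β * t))‖ := by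
    intro q t
    simp only [F]
    rw [norm_mul, hKn, norm_mul, norm_mul, Complex.norm_exp, Complex.norm_exp]
    congr 3
    simp [hre]
  have hsum : Summable fun q => ∫ t in Set.Ioi (0:ℝ), ‖F q t‖ := by
    simp_rw [hnorm, integral_const_mul]
    exact (summable_coef a ha).mul_right _
  have key := hasSum_integral_of_summable_integral_norm hint hsum
  convert! key using 1
  · funext q
    simp only [F]
    rw [integral_const_mul, integral_term n _ (by rw [hre]; exact hβ)]
    have e1 : r q = β * (1 - 2 * π * I * q / (β * T)) := by
      rw [hr, hT]; push_cast; field_simp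
    have e2 : Real.log (2 * σ ^ 2) = Real.log 2 + 2 * Real.log σ := by
      rw [Real.log_mul two_ne_zero (by positivity), Real.log_pow]; norm_num
    rw [e1, mul_zpow, intTerm, e2]
    simp only [hK, coef]
    rw [show (π * I * q / a * ((Real.log 2 + 2 * Real.log σ : ℝ) : ℂ) : ℂ)
      = π * I * q / a * Real.log 2 + 2 * π * I * q * Real.log σ / a by push_cast; ring,
      Complex.exp_add]
    ring
  · rw [← integral_complex_ofReal]
    refine integral_congr_ae (Filter.Eventually.of_forall fun t => ?_)
    simp only [F]
    push_cast
    rw [Q_eq a ha, ← tsum_mul_left, ← tsum_mul_right]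
    refine tsum_congr fun q => ?_
    have e : Complex.exp (2 * π * I * q * ((lam * t - Real.log (1 / σ) : ℝ) : ℂ) / a)
        * Complex.exp (-β * t)
        = Complex.exp (2 * π * I * q * Real.log σ / a) * Complex.exp (-(r q * t)) := by
      rw [← Complex.exp_add, ← Complex.exp_add, one_div, Real.log_inv]
      congr 1
      rw [hr]; push_cast; ring
    calc _ = (t:ℂ) ^ n * coef a q *
        (Complex.exp (2 * π * I * q * ((lam * t - Real.log (1 / σ) : ℝ) : ℂ) / a)
        * Complex.exp (-β * t)) := by ring
      _ = _ := by rw [e, hK]; ring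

theorem stmt_7 (a lam T β σ : ℝ) (n : ℕ)
    (ha : 0 < a) (hlam : 0 < lam) (hT : T = a / lam) (hβ : 0 < β)
    (hσ : σ ∈ Set.Ioo (0:ℝ) 1) :
    Summable (fun q : ℕ => ‖momentTerm a σ β T n q‖) ∧
    (∫ t in Set.Ioi (0:ℝ), t ^ n * Q a (lam * t - Real.log (1 / σ)) * Real.exp (-β * t))
      = (n.factorial : ℝ) * β ^ (-(n : ℤ) - 1) *
        (1 + 2 * (∑' q : ℕ, momentTerm a σ β T n q).re) := by
  have hS := hasSum_intTerm a lam T β σ n ha hlam hT hβ hσ.1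
  have hbc : (β:ℂ) ≠ 0 := by exact_mod_cast hβ.ne'
  have hC : (n.factorial : ℂ) * β ^ (-(n : ℤ) - 1) ≠ 0 :=
    mul_ne_zero (by exact_mod_cast n.factorial_ne_zero) (zpow_ne_zero _ hbc)
  have hM : Summable (intTerm a σ β T n) := (summable_mul_left_iff hC).1 hS.summable
  have hpos : ∀ q : ℕ, intTerm a σ β T n ((q:ℤ) + 1) = momentTerm a σ β T n q := by
    intro q; simp [intTerm, momentTerm]
  have hneg : ∀ q : ℕ, intTerm a σ β T n (-((q:ℤ) + 1))
      = (starRingEnd ℂ) (momentTerm a σ β T n q) := by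
    intro q; rw [intTerm_neg, hpos]
  have hm : Summable (momentTerm a σ β T n) := by
    have := hM.comp_injective (i := fun q : ℕ => (q:ℤ) + 1) (fun x y h => by simpa using h)
    exact this.congr hpos
  have h0 : intTerm a σ β T n 0 = 1 := by simp [intTerm]
  refine ⟨hm.norm, ?_⟩
  have htot := tsum_of_add_one_of_neg_add_one (f := intTerm a σ β T n)
    (hm.congr fun q => (hpos q).symm)
    ((Complex.summable_conj.2 hm).congr fun q => (hneg q).symm)
  simp_rw [hpos, hneg, h0, ← Complex.conj_tsum] at htot
  have e := hS.tsum_eq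
  rw [tsum_mul_left, htot, add_right_comm, Complex.add_conj] at e
  apply Complex.ofReal_injective
  rw [← e]
  push_cast
  ring
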